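/- Let A be a real n×n Hurwitz matrix, B a real n×m matrix, C a real m×n matrix, and G(s) := C (sI − A)⁻¹ B, with derivative G'(s) = −C (sI − A)⁻² B. Let λ₁, …, λ_r be distinct complex numbers with Re λ_i < 0, λ_j + λ_k ≠ 0 for all j, k, and l_i, r_i ∈ ℂ^m. Define F̂ := −2 Σ_{i=1}^r l_iᵀ G(−λ_i) r_i + Σ_{j=1}^r Σ_{k=1}^r (l_jᵀ l_k)(r_kᵀ r_j)/(−λ_j − λ_k), H_r(s) := Σ_{k=1}^r l_k r_kᵀ/(s − λ_k), and H_r'(s) := −Σ_{k=1}^r l_k r_kᵀ/(s − λ_k)². Then F̂, viewed as a function of the single complex variable λ_i with all other arguments fixed, is differentiable at λ_i, with derivative equal to −2 l_iᵀ ( H_r'(−λ_i) − G'(−λ_i) ) r_i. -/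

import Mathlib

open Matrix

/-- A real square matrix is Hurwitz if all of its complex eigenvalues
have negative real part. -/
def IsHurwitz {n : ℕ} (A : Matrix (Fin n) (Fin n) ℝ) : Prop :=
  ∀ μ ∈ spectrum ℂ (A.map Complex.ofReal), μ.re < 0

/-!
Only the `i`-th summand of `∑ⱼ lⱼᵀ G(-λⱼ) ρⱼ` depends on `λᵢ`, which gives the `G'` term. The double
sum has the symmetric coefficients `(lⱼᵀ lₖ)(ρₖᵀ ρⱼ)`, so the row `j = i` and the column `k = i`
contribute equally, and together they give twice `∑ₖ (lᵢᵀ lₖ)(ρₖᵀ ρᵢ) / (λᵢ + λₖ)²`, which is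
`-2 lᵢᵀ H_r'(-λᵢ) ρᵢ`.
-/

open Function

variable {𝕜 : Type*} [NontriviallyNormedField 𝕜]

section MatrixDeriv

variable {m p : Type*} {F : 𝕜 → Matrix p m 𝕜} {F' : Matrix p m 𝕜} {s : 𝕜}

theorem hasDerivAt_matrix_iff [Finite m] :
    HasDerivAt F F' s ↔ ∀ a b, HasDerivAt (fun z => F z a b) (F' a b) s := by
  cases nonempty_fintype m
  exact (hasDerivAt_pi (φ := F)).trans <| forall_congr' fun _ => hasDerivAt_pi

variable [Fintype m] [Fintype p]

theorem hasDerivAt_mul_mul_const {q o : Type*} [Finite o]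
    (hF : HasDerivAt F F' s) (C : Matrix q p 𝕜) (B : Matrix m o 𝕜) :
    HasDerivAt (fun z => C * F z * B) (C * F' * B) s := by
  rw [hasDerivAt_matrix_iff] at hF ⊢
  intro a b
  simp only [Matrix.mul_apply]
  exact .fun_sum fun k _ => (HasDerivAt.fun_sum fun j _ => (hF j k).const_mul (C a j)).mul_const _

theorem hasDerivAt_dotProduct_mulVec (hF : HasDerivAt F F' s) (u : p → 𝕜) (v : m → 𝕜) :
    HasDerivAt (fun z => u ⬝ᵥ (F z *ᵥ v)) (u ⬝ᵥ (F' *ᵥ v)) s := by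
  rw [hasDerivAt_matrix_iff] at hF
  simp only [dotProduct, mulVec]
  exact .fun_sum fun a _ => (HasDerivAt.fun_sum fun b _ => (hF a b).mul_const (v b)).const_mul _

end MatrixDeriv

section TransferFunction

variable {n m p : Type*} [Fintype n] [DecidableEq n]

theorem hasDerivAt_smul_one_sub_inv [CompleteSpace 𝕜] {A : Matrix n n 𝕜} {s : 𝕜}
    (hs : s ∉ spectrum 𝕜 A) :
    HasDerivAt (fun z : 𝕜 => (z • (1 : Matrix n n 𝕜) - A)⁻¹)
      (-((s • (1 : Matrix n n 𝕜) - A)⁻¹ * (s • (1 : Matrix n n 𝕜) - A)⁻¹)) s := by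
  have inv_eq_resolvent : ∀ z : 𝕜, (z • (1 : Matrix n n 𝕜) - A)⁻¹ = resolvent A z := fun z => by
    rw [nonsing_inv_eq_ringInverse, resolvent, Algebra.algebraMap_eq_smul_one]
  simp only [inv_eq_resolvent, ← sq]
  open scoped Matrix.Norms.Operator in
  -- Instance search would use the entrywise uniform structure here, not that of the norm.
  have : @CompleteSpace (Matrix n n 𝕜) PseudoMetricSpace.toUniformSpace :=
    FiniteDimensional.complete 𝕜 _
  exact spectrum.hasDerivAt_resolvent_const_left (not_not.mp hs)

/-- The transfer function `C (sI - A)⁻¹ B` of the linear system `(A, B, C)`. At points of the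
spectrum of `A` the matrix inverse takes the junk value `0`. -/
noncomputable def transferFunction (A : Matrix n n 𝕜) (B : Matrix n m 𝕜) (C : Matrix p n 𝕜)
    (s : 𝕜) : Matrix p m 𝕜 :=
  C * (s • (1 : Matrix n n 𝕜) - A)⁻¹ * B

variable [CompleteSpace 𝕜] [Finite m] {A : Matrix n n 𝕜} {B : Matrix n m 𝕜} {C : Matrix p n 𝕜}
  {s : 𝕜}

theorem hasDerivAt_transferFunction (hs : s ∉ spectrum 𝕜 A) :
    HasDerivAt (transferFunction A B C)
      (-(C * ((s • (1 : Matrix n n 𝕜) - A)⁻¹ * (s • (1 : Matrix n n 𝕜) - A)⁻¹) * B)) s := by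
  rw [← Matrix.neg_mul, ← Matrix.mul_neg]
  exact hasDerivAt_mul_mul_const (hasDerivAt_smul_one_sub_inv hs) C B

theorem hasDerivAt_of_eqOn_transferFunction {G : 𝕜 → Matrix p m 𝕜}
    (hG : Set.EqOn G (transferFunction A B C) (spectrum 𝕜 A)ᶜ) (hs : s ∉ spectrum 𝕜 A) :
    HasDerivAt G
      (-(C * ((s • (1 : Matrix n n 𝕜) - A)⁻¹ * (s • (1 : Matrix n n 𝕜) - A)⁻¹) * B)) s := by
  have eventually_notMem : ∀ᶠ z in nhds s, z ∈ (spectrum 𝕜 A)ᶜ :=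
    A.finite_spectrum.isClosed.isOpen_compl.mem_nhds hs
  have hasDerivAt_entry :=
    hasDerivAt_matrix_iff.mp (hasDerivAt_transferFunction (B := B) (C := C) hs)
  exact hasDerivAt_matrix_iff.mpr fun a b => (hasDerivAt_entry a b).congr_of_eventuallyEq <|
    eventually_notMem.mono fun z hz => congr_fun₂ (hG hz) a b

end TransferFunction

theorem IsHurwitz.neg_notMem_spectrum {n : ℕ} {A : Matrix (Fin n) (Fin n) ℝ} (hA : IsHurwitz A)
    {μ : ℂ} (hμ : μ.re < 0) : -μ ∉ spectrum ℂ (A.map Complex.ofReal) := fun hmem =>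
  hμ.not_gt (by simpa using hA _ hmem)

section CoordinateDeriv

variable {σ : Type*} [DecidableEq σ]

theorem hasDerivAt_div_neg_update_sub_update (c : 𝕜) {x : σ → 𝕜} {j k : σ} (hx : x j + x k ≠ 0)
    (i : σ) :
    HasDerivAt (fun z => c / (-update x i z j - update x i z k))
      (c / (x j + x k) ^ 2 * ((Pi.single i 1 : σ → 𝕜) j + (Pi.single i 1 : σ → 𝕜) k)) (x i) := by
  have hcoord := hasDerivAt_pi.mp (hasDerivAt_update x i (x i))
  have hne : -x j - x k ≠ 0 := by
    rw [← neg_add']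
    exact neg_ne_zero.mpr hx
  refine ((hasDerivAt_const (x i) c).fun_div ((hcoord j).fun_neg.fun_sub (hcoord k))
    (by rwa [update_eq_self])).congr_deriv ?_
  rw [update_eq_self, ← neg_add', neg_sq]
  ring

variable [Fintype σ]

theorem hasDerivAt_sum_apply_update {g : σ → 𝕜 → 𝕜} {x : σ → 𝕜} {i : σ} {g' : 𝕜}
    (hg : HasDerivAt (g i) g' (x i)) :
    HasDerivAt (fun z => ∑ j, g j (update x i z j)) g' (x i) := by
  have split_sum : ∀ z, ∑ j, g j (update x i z j) =
      g i z + ∑ j ∈ Finset.univ.erase i, g j (x j) := fun z => by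
    rw [← Finset.add_sum_erase _ _ (Finset.mem_univ i), update_self]
    congr 1
    exact Finset.sum_congr rfl fun j hj => by rw [update_of_ne (Finset.ne_of_mem_erase hj)]
  simpa only [split_sum] using hg.add_const _

theorem sum_sum_mul_single_add_single {d : σ → σ → 𝕜} (hd : ∀ j k, d j k = d k j) (i : σ) :
    ∑ j, ∑ k, d j k * ((Pi.single i 1 : σ → 𝕜) j + (Pi.single i 1 : σ → 𝕜) k) =
      2 * ∑ k, d i k := by
  have row : ∑ j, ∑ k, d j k * (Pi.single i 1 : σ → 𝕜) j = ∑ k, d i k := by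
    simp [Pi.single_apply]
  have column : ∑ j, ∑ k, d j k * (Pi.single i 1 : σ → 𝕜) k = ∑ k, d i k := by
    simp [Pi.single_apply, hd i]
  simp only [mul_add, Finset.sum_add_distrib, row, column, two_mul]

theorem hasDerivAt_sum_sum_div_neg_update_sub_update {c : σ → σ → 𝕜} (hc : ∀ j k, c j k = c k j)
    {x : σ → 𝕜} (hx : ∀ j k, x j + x k ≠ 0) (i : σ) :
    HasDerivAt (fun z => ∑ j, ∑ k, c j k / (-update x i z j - update x i z k))
      (2 * ∑ k, c i k / (x i + x k) ^ 2) (x i) := by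
  rw [← sum_sum_mul_single_add_single (d := fun j k => c j k / (x j + x k) ^ 2)
    (fun j k => by rw [hc, add_comm]) i]
  exact .fun_sum fun j _ => .fun_sum fun k _ =>
    hasDerivAt_div_neg_update_sub_update (c j k) (hx j k) i

end CoordinateDeriv

section PoleResidue

variable {σ m p : Type*} [Fintype σ] [Fintype m] [Fintype p]

/-- The pole–residue form `F̂` of the H2 objective for the transfer function `G`, without the
constant `‖G‖²`, as a function of the poles `x` and the residue directions `l` and `ρ`. -/
def poleResidueObjective (G : 𝕜 → Matrix p m 𝕜) (l : σ → p → 𝕜) (ρ : σ → m → 𝕜) (x : σ → 𝕜) : 𝕜 :=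
  -2 * ∑ j, l j ⬝ᵥ (G (-x j) *ᵥ ρ j) +
    ∑ j, ∑ k, (l j ⬝ᵥ l k) * (ρ k ⬝ᵥ ρ j) / (-x j - x k)

/-- The derivative `H_r'(s)` of the reduced-order transfer function `H_r(s) = ∑ₖ lₖ ρₖᵀ / (s - xₖ)`,
given by its explicit formula. -/
def poleResidueDeriv (l : σ → p → 𝕜) (ρ : σ → m → 𝕜) (x : σ → 𝕜) (s : 𝕜) : Matrix p m 𝕜 :=
  -∑ k, ((s - x k) ^ 2)⁻¹ • vecMulVec (l k) (ρ k)

theorem dotProduct_poleResidueDeriv_neg_mulVec (l : σ → p → 𝕜) (ρ : σ → m → 𝕜) (x : σ → 𝕜)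
    (i : σ) :
    l i ⬝ᵥ (poleResidueDeriv l ρ x (-x i) *ᵥ ρ i) =
      -∑ k, (l i ⬝ᵥ l k) * (ρ k ⬝ᵥ ρ i) / (x i + x k) ^ 2 := by
  rw [poleResidueDeriv, neg_mulVec, dotProduct_neg, sum_mulVec, dotProduct_sum]
  congr 1
  refine Finset.sum_congr rfl fun k _ => ?_
  rw [smul_mulVec, dotProduct_smul, vecMulVec_mulVec, op_smul_eq_smul, dotProduct_smul,
    smul_eq_mul, smul_eq_mul, ← neg_add', neg_sq]
  ring

theorem stmt_13_general [DecidableEq σ] {G : 𝕜 → Matrix p m 𝕜} {G' : Matrix p m 𝕜} {x : σ → 𝕜}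
    {i : σ} (hG : HasDerivAt G G' (-x i)) (hx : ∀ j k, x j + x k ≠ 0)
    (l : σ → p → 𝕜) (ρ : σ → m → 𝕜) :
    HasDerivAt (fun z => poleResidueObjective G l ρ (update x i z))
      (-2 * (l i ⬝ᵥ ((poleResidueDeriv l ρ x (-x i) - G') *ᵥ ρ i))) (x i) := by
  have linear_part : HasDerivAt (fun z => ∑ j, l j ⬝ᵥ (G (-update x i z j) *ᵥ ρ j))
      (l i ⬝ᵥ (G' *ᵥ ρ i) * -1) (x i) :=
    hasDerivAt_sum_apply_update (g := fun j z => l j ⬝ᵥ (G (-z) *ᵥ ρ j)) <|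
      (hasDerivAt_dotProduct_mulVec hG (l i) (ρ i)).comp (x i) (hasDerivAt_neg (x i))
  have quadratic_part := hasDerivAt_sum_sum_div_neg_update_sub_update
    (c := fun j k => (l j ⬝ᵥ l k) * (ρ k ⬝ᵥ ρ j))
    (fun j k => by rw [dotProduct_comm (l j), dotProduct_comm (ρ k)]) hx i
  refine ((linear_part.const_mul (-2)).fun_add quadratic_part).congr_deriv ?_
  rw [sub_mulVec, dotProduct_sub, dotProduct_poleResidueDeriv_neg_mulVec]
  ring

end PoleResidue

/-- Derivative of the pole–residue H2 objective with respect to a pole: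
`F̂ = −2 Σᵢ lᵢᵀ G(−λᵢ) rᵢ + Σⱼₖ (lⱼᵀ lₖ)(rₖᵀ rⱼ)/(−λⱼ − λₖ)`, viewed as a function of
the single complex variable `λᵢ`, is differentiable at `λᵢ` with derivative
`−2 lᵢᵀ (H_r'(−λᵢ) − G'(−λᵢ)) rᵢ`, where `G'(s) = −C (sI − A)⁻² B` and
`H_r'(s) = −Σₖ lₖ rₖᵀ/(s − λₖ)²`. -/
theorem stmt_13 {n m r : ℕ} (A : Matrix (Fin n) (Fin n) ℝ) (hA : IsHurwitz A)
    (B : Matrix (Fin n) (Fin m) ℝ) (C : Matrix (Fin m) (Fin n) ℝ)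
    (G G' : ℂ → Matrix (Fin m) (Fin m) ℂ)
    (hG : ∀ s : ℂ, s ∉ spectrum ℂ (A.map Complex.ofReal) →
      G s = C.map Complex.ofReal *
        (s • (1 : Matrix (Fin n) (Fin n) ℂ) - A.map Complex.ofReal)⁻¹ *
        B.map Complex.ofReal)
    (hG' : ∀ s : ℂ, s ∉ spectrum ℂ (A.map Complex.ofReal) →
      G' s = -(C.map Complex.ofReal *
        ((s • (1 : Matrix (Fin n) (Fin n) ℂ) - A.map Complex.ofReal)⁻¹ *
          (s • (1 : Matrix (Fin n) (Fin n) ℂ) - A.map Complex.ofReal)⁻¹) *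
        B.map Complex.ofReal))
    (lam : Fin r → ℂ)
    (hdist : Function.Injective lam)
    (hstab : ∀ i, (lam i).re < 0)
    (hsum : ∀ j k, lam j + lam k ≠ 0)
    (l ρ : Fin r → (Fin m → ℂ))
    (Hr' : ℂ → Matrix (Fin m) (Fin m) ℂ)
    (hHr' : ∀ s : ℂ,
      Hr' s = -∑ k : Fin r, ((s - lam k) ^ 2)⁻¹ • Matrix.vecMulVec (l k) (ρ k))
    (i : Fin r) :
    HasDerivAt (fun z : ℂ =>
        -2 * ∑ i' : Fin r,
            l i' ⬝ᵥ (G (-(Function.update lam i z i')) *ᵥ ρ i') +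
          ∑ j : Fin r, ∑ k : Fin r,
            (l j ⬝ᵥ l k) * (ρ k ⬝ᵥ ρ j) /
              (-(Function.update lam i z j) - Function.update lam i z k))
      (-2 * (l i ⬝ᵥ ((Hr' (-(lam i)) - G' (-(lam i))) *ᵥ ρ i)))
      (lam i) := by
  have hreg := hA.neg_notMem_spectrum (hstab i)
  rw [hHr', hG' _ hreg]
  exact stmt_13_general (hasDerivAt_of_eqOn_transferFunction hG hreg) hsum l ρ
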